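/- arXiv:2604.14940 — 2 statements merged into one kernel-verified Lean document; each statement's English description precedes it below -/
import Mathlib

section
/- Second order necessary optimality conditions on an L² box. Let (Ω, μ) be a finite measure space, a < b real numbers, and Q_ad := { q ∈ L²(μ) : a ≤ q ≤ b μ-a.e. }. Let j : L²(μ) → ℝ be twice continuously Fréchet differentiable, let q̄ ∈ Q_ad be a local minimizer of j on Q_ad with respect to the L²(μ)-norm, and let d̄ ∈ L²(μ) represent the first derivative: j′(q̄)w = ∫_Ω d̄ w dμ for all w ∈ L²(μ). Then for every h in the critical cone C_{q̄} one has j″(q̄)(h,h) ≥ 0. -/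
open MeasureTheory

/-!
For `K ⊆ E`, a local minimizer `q` of `j` on `K` and a direction `v` with `j'(q) v ≤ 0` that stays
feasible for small times, the scalar function `t ↦ j (q + t v)` gives `j''(q)(v, v) ≥ 0`. By
continuity of the quadratic form this extends to limits of such directions. A critical direction
`h` of a pointwise constraint is feasible only pointwise, for a time depending on `x`. Setting `h`
to zero off the set where `q + t h` is feasible yields a direction feasible up to time `t`, still
annihilated by `j'(q)`, and dominated convergence shows that these truncations tend to `h` as
`t ↓ 0`.
-/

open Filter Set Topology
open scoped ENNReal

section RadialCone

variable {E : Type*} [AddCommGroup E] [Module ℝ E]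

/-- The cone of radial (feasible) directions of `K` at `q`: the directions `v` such that `q + t • v`
stays in `K` for all sufficiently small `t > 0`. The point `q` itself need not lie in `K`. -/
def radialCone (K : Set E) (q : E) : Set E :=
  {v | ∀ᶠ t : ℝ in 𝓝[>] 0, q + t • v ∈ K}

theorem mem_radialCone {K : Set E} {q v : E} :
    v ∈ radialCone K q ↔ ∀ᶠ t : ℝ in 𝓝[>] 0, q + t • v ∈ K :=
  Iff.rfl

theorem radialCone_inter (K L : Set E) (q : E) :
    radialCone (K ∩ L) q = radialCone K q ∩ radialCone L q :=
  Set.ext fun _ ↦ by simp only [mem_inter_iff, mem_radialCone, eventually_and]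

theorem mem_radialCone_of_mem_nhds [TopologicalSpace E] [ContinuousAdd E] [ContinuousSMul ℝ E]
    {K : Set E} {q : E} (hK : K ∈ 𝓝 q) (v : E) : v ∈ radialCone K q := by
  have hlim : Tendsto (fun t : ℝ ↦ q + t • v) (𝓝 0) (𝓝 q) :=
    Continuous.tendsto' (by fun_prop) 0 q (by simp)
  exact (hlim.mono_left nhdsWithin_le_nhds).eventually hK

theorem mem_radialCone_Ici {a x v : ℝ} (hx : a ≤ x) :
    v ∈ radialCone (Ici a) x ↔ (x = a → 0 ≤ v) := by
  rcases hx.eq_or_lt with rfl | hlt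
  · simp only [mem_radialCone, smul_eq_mul, mem_Ici, le_add_iff_nonneg_right, forall_const]
    refine ⟨fun hv ↦ ?_, fun hv ↦ ?_⟩
    · obtain ⟨t, htv, ht⟩ := (hv.and self_mem_nhdsWithin).exists
      exact nonneg_of_mul_nonneg_right htv ht
    · filter_upwards [self_mem_nhdsWithin] with t ht using mul_nonneg (le_of_lt ht) hv
  · exact iff_of_true (mem_radialCone_of_mem_nhds (Ici_mem_nhds hlt) v) fun h ↦ absurd h hlt.ne'

theorem mem_radialCone_Iic {b x v : ℝ} (hx : x ≤ b) :
    v ∈ radialCone (Iic b) x ↔ (x = b → v ≤ 0) := by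
  have hneg : v ∈ radialCone (Iic b) x ↔ -v ∈ radialCone (Ici (-b)) (-x) := by
    simp only [mem_radialCone, mem_Iic, mem_Ici, smul_neg, ← neg_add, neg_le_neg_iff]
  rw [hneg, mem_radialCone_Ici (neg_le_neg hx), neg_inj, neg_nonneg]

theorem mem_radialCone_Icc {a b x v : ℝ} (hx : x ∈ Icc a b) :
    v ∈ radialCone (Icc a b) x ↔ (x = a → 0 ≤ v) ∧ (x = b → v ≤ 0) := by
  rw [← Ici_inter_Iic, radialCone_inter, mem_inter_iff, mem_radialCone_Ici hx.1,
    mem_radialCone_Iic hx.2]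

end RadialCone

section SecondOrder

theorem nonneg_of_hasDerivWithinAt_Ioi_of_frequently_le {g g' : ℝ → ℝ} {c x : ℝ}
    (hcont : ContinuousWithinAt g (Ioi x) x) (hg : ∀ᶠ t in 𝓝[>] x, HasDerivAt g (g' t) t)
    (hg' : HasDerivWithinAt g' c (Ioi x) x) (hx : g' x ≤ 0)
    (hle : ∃ᶠ t in 𝓝[>] x, g x ≤ g t) : 0 ≤ c := by
  have hslope : Tendsto (slope g' x) (𝓝[>] x) (𝓝 c) :=
    (hasDerivWithinAt_iff_tendsto_slope' self_notMem_Ioi).1 hg'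
  refine ge_of_tendsto_of_frequently hslope (frequently_iff.2 fun {U} hU ↦ ?_)
  obtain ⟨e, hxe : x < e, hsub⟩ := mem_nhdsGT_iff_exists_Ioo_subset.1 (inter_mem hU hg)
  obtain ⟨t, hgt, ht⟩ := (hle.and_eventually (Ioo_mem_nhdsGT hxe)).exists
  have hcontOn : ContinuousOn g (Icc x t) := fun s hs ↦ by
    rcases hs.1.eq_or_lt with rfl | hxs
    · exact (continuousWithinAt_Ioi_iff_Ici.1 hcont).mono Icc_subset_Ici_self
    · exact (hsub ⟨hxs, hs.2.trans_lt ht.2⟩).2.continuousAt.continuousWithinAt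
  obtain ⟨s, hs, hmean⟩ := exists_hasDerivAt_eq_slope g g' ht.1 hcontOn
    fun s hs ↦ (hsub ⟨hs.1, hs.2.trans ht.2⟩).2
  have hg's : 0 ≤ g' s := hmean ▸ div_nonneg (sub_nonneg.2 hgt) (sub_nonneg.2 ht.1.le)
  refine ⟨s, (hsub ⟨hs.1, hs.2.trans ht.2⟩).1, ?_⟩
  rw [slope_def_field]
  exact div_nonneg (sub_nonneg.2 (hx.trans hg's)) (sub_nonneg.2 hs.1.le)

theorem isLocalMinOn_of_forall_norm_sub_le {E β : Type*} [SeminormedAddCommGroup E] [Preorder β]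
    {f : E → β} {K : Set E} {q : E} {ε : ℝ} (hε : 0 < ε)
    (hle : ∀ y ∈ K, ‖y - q‖ ≤ ε → f q ≤ f y) : IsLocalMinOn f K q := by
  filter_upwards [inter_mem_nhdsWithin K (Metric.closedBall_mem_nhds q hε)] with y hy
  exact hle y hy.1 (mem_closedBall_iff_norm.1 hy.2)

variable {E : Type*} [NormedAddCommGroup E] [NormedSpace ℝ E]
  {f : E → ℝ} {f' : E → E →L[ℝ] ℝ} {f'' : E →L[ℝ] E →L[ℝ] ℝ} {K : Set E} {q v : E}

theorem second_fderiv_nonneg_of_mem_radialCone (hf : ∀ᶠ y in 𝓝 q, HasFDerivAt f (f' y) y)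
    (hf' : HasFDerivAt f' f'' q) (hmin : IsLocalMinOn f K q) (hv : v ∈ radialCone K q)
    (hv' : f' q v ≤ 0) : 0 ≤ f'' v v := by
  let γ : ℝ → E := fun t ↦ q + t • v
  have hγ : ∀ t, HasDerivAt γ v t := fun t ↦ by
    simpa [γ] using ((hasDerivAt_id t).smul_const v).const_add q
  have hγ0 : γ 0 = q := by simp [γ]
  have hγlim : Tendsto γ (𝓝 0) (𝓝 q) := hγ0 ▸ (hγ 0).continuousAt.tendsto
  have hderiv : ∀ᶠ t in 𝓝 0, HasDerivAt (f ∘ γ) (f' (γ t) v) t :=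
    (hγlim.eventually hf).mono fun t ht ↦ ht.comp_hasDerivAt t (hγ t)
  have hderiv' : HasDerivAt (fun t ↦ f' (γ t) v) (f'' v v) 0 := by
    have hf'γ : HasFDerivAt f' f'' (γ 0) := hγ0.symm ▸ hf'
    simpa using (hf'γ.comp_hasDerivAt 0 (hγ 0)).clm_apply (hasDerivAt_const 0 v)
  have hγK : Tendsto γ (𝓝[>] 0) (𝓝[K] q) :=
    tendsto_nhdsWithin_iff.2 ⟨hγlim.mono_left nhdsWithin_le_nhds, hv⟩
  have hle : ∀ᶠ t in 𝓝[>] 0, f (γ 0) ≤ f (γ t) := by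
    rw [hγ0]
    exact hγK.eventually hmin
  exact nonneg_of_hasDerivWithinAt_Ioi_of_frequently_le
    hderiv.self_of_nhds.continuousAt.continuousWithinAt (hderiv.filter_mono nhdsWithin_le_nhds)
    hderiv'.hasDerivWithinAt (by rwa [hγ0]) hle.frequently

theorem second_fderiv_nonneg_of_mem_closure (hf : ∀ᶠ y in 𝓝 q, HasFDerivAt f (f' y) y)
    (hf' : HasFDerivAt f' f'' q) (hmin : IsLocalMinOn f K q)
    (hv : v ∈ closure (radialCone K q ∩ {w | f' q w ≤ 0})) : 0 ≤ f'' v v := by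
  have hclosed : IsClosed {w | 0 ≤ f'' w w} := isClosed_le continuous_const (by fun_prop)
  exact closure_minimal
    (fun _ hw ↦ second_fderiv_nonneg_of_mem_radialCone hf hf' hmin hw.1 hw.2) hclosed hv

end SecondOrder

section Truncation

variable {Ω E : Type*} [MeasurableSpace Ω] {μ : Measure Ω} [NormedAddCommGroup E] {p : ℝ≥0∞}

theorem tendsto_eLpNorm_zero_of_dominated {ι G : Type*} {l : Filter ι} [l.IsCountablyGenerated]
    [NormedAddCommGroup G] (hp : p ≠ ∞) {F : ι → Ω → E} {g : Ω → G}
    (hF : ∀ i, AEStronglyMeasurable (F i) μ) (hg : MemLp g p μ)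
    (hbound : ∀ i, ∀ᵐ x ∂μ, ‖F i x‖ₑ ≤ ‖g x‖ₑ)
    (hlim : ∀ᵐ x ∂μ, Tendsto (F · x) l (𝓝 0)) :
    Tendsto (fun i ↦ eLpNorm (F i) p μ) l (𝓝 0) := by
  rcases eq_or_ne p 0 with rfl | hp0
  · simpa only [eLpNorm_exponent_zero] using tendsto_const_nhds
  have hpos : 0 < p.toReal := ENNReal.toReal_pos hp0 hp
  have hint : Tendsto (fun i ↦ ∫⁻ x, ‖F i x‖ₑ ^ p.toReal ∂μ) l (𝓝 (∫⁻ _, 0 ∂μ)) := by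
    refine tendsto_of_seq_tendsto fun u hu ↦
      tendsto_lintegral_of_dominated_convergence' (fun x ↦ ‖g x‖ₑ ^ p.toReal)
        (fun n ↦ (hF (u n)).enorm.pow_const _) (fun n ↦ ?_)
        (lintegral_rpow_enorm_lt_top_of_eLpNorm_lt_top hp0 hp hg.2).ne ?_
    · filter_upwards [hbound (u n)] with x hx using ENNReal.rpow_le_rpow hx hpos.le
    · filter_upwards [hlim] with x hx
      simpa [hpos] using (hx.comp hu).enorm.ennrpow_const p.toReal
  simpa [eLpNorm_eq_lintegral_rpow_enorm_toReal hp0 hp, hpos]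
    using hint.ennrpow_const (1 / p.toReal)

theorem tendsto_toLp_indicator [Fact (1 ≤ p)] {ι : Type*} {l : Filter ι} [l.IsCountablyGenerated]
    (hp : p ≠ ∞) {f : Ω → E} (hf : MemLp f p μ) {S : ι → Set Ω} (hS : ∀ i, MeasurableSet (S i))
    (hmem : ∀ᵐ x ∂μ, ∀ᶠ i in l, x ∈ S i) :
    Tendsto (fun i ↦ (hf.indicator (hS i)).toLp) l (𝓝 hf.toLp) := by
  rw [Lp.tendsto_Lp_iff_tendsto_eLpNorm'']
  refine tendsto_eLpNorm_zero_of_dominated hp (fun i ↦ (hf.indicator (hS i)).1.sub hf.1) hf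
    (fun i ↦ .of_forall fun x ↦ ?_) ?_
  · by_cases hx : x ∈ S i <;> simp [hx]
  · filter_upwards [hmem] with x hx
    refine tendsto_const_nhds.congr' (hx.mono fun i hi ↦ ?_)
    simp [hi]

variable [NormedSpace ℝ E] {K : Ω → Set E} {q h : Lp E p μ}

theorem toLp_indicator_mem_radialCone
    (hK : ∀ᵐ x ∂μ, StarConvex ℝ (q x) (K x)) (hq : ∀ᵐ x ∂μ, q x ∈ K x) {t : ℝ} (ht : 0 < t)
    {S : Set Ω} (hS : MeasurableSet S) (hfeas : ∀ᵐ x ∂μ, x ∈ S → q x + t • h x ∈ K x) :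
    ((Lp.memLp h).indicator hS).toLp ∈ radialCone {u : Lp E p μ | ∀ᵐ x ∂μ, u x ∈ K x} q := by
  filter_upwards [Ioc_mem_nhdsGT ht] with s hs
  set v := ((Lp.memLp h).indicator hS).toLp
  filter_upwards [hK, hq, hfeas, ((Lp.memLp h).indicator hS).coeFn_toLp,
    Lp.coeFn_add q (s • v), Lp.coeFn_smul s v] with x hKx hqx hfx hv hadd hsmul
  rw [hadd, Pi.add_apply, hsmul, Pi.smul_apply, hv]
  by_cases hx : x ∈ S
  · rw [indicator_of_mem hx]
    have hscale : s • h x = (s / t) • t • h x := by rw [smul_smul, div_mul_cancel₀ _ ht.ne']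
    rw [hscale]
    exact hKx.add_smul_mem (hfx hx) (div_pos hs.1 ht).le ((div_le_one ht).2 hs.2)
  · simpa [hx] using hqx

-- For polyhedral `K x` the radial and tangent cones at `q x` agree, so this is the polyhedricity of
-- the pointwise constraint set at `q`.
theorem mem_closure_radialCone_of_ae_mem_radialCone [Fact (1 ≤ p)] (hp : p ≠ ∞)
    [MeasurableSpace E] [BorelSpace E] (hKmeas : MeasurableSet {z : Ω × E | z.2 ∈ K z.1})
    (hK : ∀ᵐ x ∂μ, StarConvex ℝ (q x) (K x)) (hq : ∀ᵐ x ∂μ, q x ∈ K x)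
    (hh : ∀ᵐ x ∂μ, h x ∈ radialCone (K x) (q x)) :
    h ∈ closure (radialCone {u : Lp E p μ | ∀ᵐ x ∂μ, u x ∈ K x} q ∩
      {v | ∀ᵐ x ∂μ, v x = h x ∨ v x = 0}) := by
  let S : ℝ → Set Ω := fun t ↦ {x | q x + t • h x ∈ K x}
  have hS : ∀ t, MeasurableSet (S t) := fun t ↦
    (measurable_id.prodMk ((Lp.stronglyMeasurable q).add
      ((Lp.stronglyMeasurable h).const_smul t)).measurable) hKmeas
  have hmem : ∀ᵐ x ∂μ, ∀ᶠ t in 𝓝[>] (0 : ℝ), x ∈ S t :=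
    hh.mono fun _ hx ↦ mem_radialCone.1 hx
  have hlim := tendsto_toLp_indicator hp (Lp.memLp h) hS hmem
  rw [Lp.toLp_coeFn] at hlim
  refine mem_closure_of_tendsto hlim ?_
  filter_upwards [self_mem_nhdsWithin] with t ht
  refine ⟨toLp_indicator_mem_radialCone hK hq ht (hS t) (.of_forall fun _ hx ↦ hx), ?_⟩
  filter_upwards [((Lp.memLp h).indicator (hS t)).coeFn_toLp] with x hx
  rw [hx]
  exact (indicator_eq_zero_or_self _ _ _).symm

end Truncation

theorem stmt_9_general {Ω : Type*} [MeasurableSpace Ω] {μ : Measure Ω} {p : ℝ≥0∞}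
    [Fact (1 ≤ p)] (hp : p ≠ ∞) {a b : Ω → ℝ} (ha : Measurable a) (hb : Measurable b)
    {j : Lp ℝ p μ → ℝ} {j' : Lp ℝ p μ → Lp ℝ p μ →L[ℝ] ℝ}
    {j'' : Lp ℝ p μ →L[ℝ] Lp ℝ p μ →L[ℝ] ℝ} {qbar : Lp ℝ p μ}
    (hj : ∀ᶠ q in 𝓝 qbar, HasFDerivAt j (j' q) q) (hj' : HasFDerivAt j' j'' qbar)
    (hqbar : ∀ᵐ x ∂μ, qbar x ∈ Icc (a x) (b x))
    (hmin : IsLocalMinOn j {q | ∀ᵐ x ∂μ, q x ∈ Icc (a x) (b x)} qbar)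
    {d : Ω → ℝ} (hrep : ∀ w : Lp ℝ p μ, j' qbar w = ∫ x, d x * w x ∂μ) {h : Lp ℝ p μ}
    (hC : ∀ᵐ x ∂μ, (d x ≠ 0 → h x = 0) ∧
      (qbar x = a x → 0 ≤ h x) ∧ (qbar x = b x → h x ≤ 0)) :
    0 ≤ j'' h h := by
  have hradial : ∀ᵐ x ∂μ, h x ∈ radialCone (Icc (a x) (b x)) (qbar x) := by
    filter_upwards [hqbar, hC] with x hx hCx using (mem_radialCone_Icc hx).2 hCx.2
  have hmeas : MeasurableSet {z : Ω × ℝ | z.2 ∈ Icc (a z.1) (b z.1)} := by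
    simpa using measurableSet_region_between_cc ha hb .univ
  have hconvex : ∀ᵐ x ∂μ, StarConvex ℝ (qbar x) (Icc (a x) (b x)) :=
    hqbar.mono fun x hx ↦ (convex_Icc _ _).starConvex hx
  refine second_fderiv_nonneg_of_mem_closure hj hj' hmin
    (closure_mono (inter_subset_inter_right _ fun v hv ↦ ?_)
      (mem_closure_radialCone_of_ae_mem_radialCone hp hmeas hconvex hqbar hradial))
  have hdv : ∀ᵐ x ∂μ, d x * v x = 0 := by
    filter_upwards [hv, hC] with x hvx hCx
    rcases hvx with hvh | hv0
    · rw [hvh, mul_eq_zero]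
      exact or_iff_not_imp_left.2 hCx.1
    · rw [hv0, mul_zero]
  exact ((hrep v).trans (integral_eq_zero_of_ae hdv)).le

/-- Second order necessary optimality conditions on an `L²` box: if `j` is `C²`,
`q̄ ∈ Q_ad` is a local minimizer of `j` on `Q_ad`, and `d̄ ∈ L²` represents `j'(q̄)`,
then `j''(q̄)(h,h) ≥ 0` for every `h` in the critical cone `C_{q̄}`. -/
theorem stmt_9 {Ω : Type*} [MeasurableSpace Ω] (μ : Measure Ω) [IsFiniteMeasure μ]
    (a b : ℝ) (hab : a < b)
    (j : Lp ℝ 2 μ → ℝ) (hj : ContDiff ℝ 2 j)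
    (qbar : Lp ℝ 2 μ) (hqbar_ad : ∀ᵐ x ∂μ, a ≤ qbar x ∧ qbar x ≤ b)
    (hmin : ∃ ε > 0, ∀ q : Lp ℝ 2 μ, (∀ᵐ x ∂μ, a ≤ q x ∧ q x ≤ b) →
      ‖q - qbar‖ ≤ ε → j qbar ≤ j q)
    (dbar : Lp ℝ 2 μ)
    (hrep : ∀ w : Lp ℝ 2 μ, fderiv ℝ j qbar w = ∫ x, dbar x * w x ∂μ)
    (h : Lp ℝ 2 μ)
    (hC : ∀ᵐ x ∂μ, (dbar x ≠ 0 → h x = 0) ∧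
      (qbar x = a → 0 ≤ h x) ∧ (qbar x = b → h x ≤ 0)) :
    0 ≤ fderiv ℝ (fderiv ℝ j) qbar h h := by
  obtain ⟨ε, hε, hle⟩ := hmin
  have hj' : Differentiable ℝ (fderiv ℝ j) :=
    (hj.fderiv_right (m := 1) one_add_one_eq_two.le).differentiable one_ne_zero
  exact stmt_9_general ENNReal.ofNat_ne_top measurable_const measurable_const
    (.of_forall fun q ↦ (hj.differentiable two_ne_zero q).hasFDerivAt) (hj' qbar).hasFDerivAt
    hqbar_ad (isLocalMinOn_of_forall_norm_sub_le hε hle) hrep hC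
end

section
/- Second order sufficient optimality conditions (quadratic growth) on an L² box. Let (Ω, μ) be a finite measure space, a < b real numbers, and Q_ad := { q ∈ L²(μ) : a ≤ q ≤ b μ-a.e. }. Let j : L²(μ) → ℝ be twice continuously Fréchet differentiable and let q̄ ∈ Q_ad and d̄ ∈ L²(μ) satisfy: (i) j′(q̄)w = ∫_Ω d̄ w dμ for all w ∈ L²(μ); (ii) the variational inequality ∫_Ω d̄ (q − q̄) dμ ≥ 0 for all q ∈ Q_ad. Assume there exists α > 0 such that for every sequence (q_k) ⊂ Q_ad with q_k → q̄ in L²(μ) and every sequence (h_k) ⊂ L²(μ) with ‖h_k‖_{L²(μ)} = 1 converging weakly in L²(μ) to some h (i.e. ∫ h_k g dμ → ∫ h g dμ for every g ∈ L²(μ)), one has liminf_k j″(q_k)(h_k,h_k) ≥ j″(q̄)(h,h) + α(1 − ‖h‖²_{L²(μ)}). Assume finally that j″(q̄)(v,v) > 0 for every v ∈ C_{q̄} with v ≠ 0. Then there exist δ > 0 and σ > 0 such that j(q) ≥ j(q̄) + (δ/2)‖q − q̄‖²_{L²(μ)} for every q ∈ Q_ad with ‖q − q̄‖_{L²(μ)}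 ≤ σ. -/
open MeasureTheory Filter

/-!
If quadratic growth on `C` fails at `x`, Taylor's formula produces points `ξₖ → x` of `C` and unit
feasible directions `uₖ` with `j'(x) uₖ → 0` and `limsup j''(ξₖ)(uₖ, uₖ) ≤ 0`. A weak cluster point
`h` of `(uₖ)` lies in the tangent cone of `C` and is annihilated by `j'(x)`. The Legendre term
rules out `h = 0`, and positivity of `j''(x)` on critical directions rules out `h ≠ 0`.

On `L²`, a constraint set defined pointwise is stable under cutting off feasible directions to
measurable sets. Hence `⟪g, h⟫ ≥ 0` holds pointwise as soon as `h` is tangent and `g` is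
nonnegative on all feasible directions. Taking `g = d̄` gives `d̄ h ≥ 0`, so `d̄ h` vanishes when
its integral does; taking `g = ±|h|`, cut off to the active sets, gives the sign conditions on `h`.
-/

open Set ProperCone
open scoped Topology InnerProductSpace RealInnerProductSpace

section Taylor

variable {E : Type*} [NormedAddCommGroup E] [NormedSpace ℝ E]

theorem exists_mem_openSegment_eq_taylor_two {f : E → ℝ} {x y : E}
    (hf : ∀ z ∈ segment ℝ x y, DifferentiableAt ℝ f z)
    (hf' : ∀ z ∈ segment ℝ x y, DifferentiableAt ℝ (fderiv ℝ f) z) :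
    ∃ ξ ∈ openSegment ℝ x y,
      f y = f x + fderiv ℝ f x (y - x) + 1 / 2 * fderiv ℝ (fderiv ℝ f) ξ (y - x) (y - x) := by
  let γ : ℝ → E := AffineMap.lineMap x y
  have hγ (t : ℝ) : HasDerivAt γ (y - x) t := AffineMap.hasDerivAt_lineMap
  have hγ_mem : ∀ t ∈ Icc (0 : ℝ) 1, γ t ∈ segment ℝ x y := fun t ht ↦
    segment_eq_image_lineMap ℝ x y ▸ mem_image_of_mem _ ht
  -- The derivative of `F` contains no first-order term, so the Cauchy mean value theorem applied
  -- to `F` and `G` compares it directly with the second derivative.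
  let F (t : ℝ) : ℝ := f (γ t) + fderiv ℝ f (γ t) (y - x) * (1 - t)
  let G (t : ℝ) : ℝ := t - t ^ 2 / 2
  have hF : ∀ t ∈ Icc (0 : ℝ) 1,
      HasDerivAt F (fderiv ℝ (fderiv ℝ f) (γ t) (y - x) (y - x) * (1 - t)) t := by
    intro t ht
    have h₀ := (hf _ (hγ_mem t ht)).hasFDerivAt.comp_hasDerivAt t (hγ t)
    have h₁ := ((hf' _ (hγ_mem t ht)).hasFDerivAt.comp_hasDerivAt t (hγ t)).clm_apply
      (hasDerivAt_const t (y - x))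
    exact (h₀.add (h₁.mul ((hasDerivAt_id t).const_sub 1))).congr_deriv (by simp [-map_sub])
  have hG (t : ℝ) : HasDerivAt G (1 - t) t :=
    ((hasDerivAt_id t).sub (((hasDerivAt_id t).pow 2).div_const 2)).congr_deriv (by simp)
  obtain ⟨t, ht, hslope⟩ := exists_ratio_hasDerivAt_eq_ratio_slope F _ one_pos
    (fun t ht ↦ (hF t ht).continuousAt.continuousWithinAt)
    (fun t ht ↦ hF t (Ioo_subset_Icc_self ht)) G _
    (fun t _ ↦ (hG t).continuousAt.continuousWithinAt) (fun t _ ↦ hG t)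
  refine ⟨γ t, lineMap_mem_openSegment ℝ x y ht, ?_⟩
  have ht_ne : 1 - t ≠ 0 := (sub_pos.2 ht.2).ne'
  apply mul_left_cancel₀ ht_ne
  simp only [F, G, γ, AffineMap.lineMap_apply_zero, AffineMap.lineMap_apply_one] at hslope ⊢
  linear_combination -hslope

theorem isBoundedUnder_abs_fderiv_fderiv {ι : Type*} {l : Filter ι} {f : E → ℝ}
    (hf : ContDiff ℝ 2 f) {x : E} {ξ u : ι → E} (hξ : Tendsto ξ l (𝓝 x)) (hu : ∀ i, ‖u i‖ = 1) :
    IsBoundedUnder (· ≤ ·) l fun i ↦ |fderiv ℝ (fderiv ℝ f) (ξ i) (u i) (u i)| := by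
  have hcont : Continuous (fderiv ℝ (fderiv ℝ f)) :=
    (hf.fderiv_right (m := 1) le_rfl).continuous_fderiv one_ne_zero
  have hnorm : Tendsto (fun i ↦ ‖fderiv ℝ (fderiv ℝ f) (ξ i)‖) l
      (𝓝 ‖fderiv ℝ (fderiv ℝ f) x‖) :=
    ((Continuous.norm (E := E →L[ℝ] E →L[ℝ] ℝ) hcont).tendsto x).comp hξ
  refine hnorm.isBoundedUnder_le.mono_le (Eventually.of_forall fun i ↦ ?_)
  simpa only [Real.norm_eq_abs, hu i, mul_one] using
    (fderiv ℝ (fderiv ℝ f) (ξ i)).le_opNorm₂ (u i) (u i)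

end Taylor

section WeakCompactness

variable {𝕜 E : Type*} [RCLike 𝕜] [NormedAddCommGroup E] [InnerProductSpace 𝕜 E] [CompleteSpace E]

theorem exists_subseq_tendsto_inner_of_separable [TopologicalSpace.SeparableSpace E]
    {u : ℕ → E} {r : ℝ} (hu : ∀ n, ‖u n‖ ≤ r) :
    ∃ h : E, ‖h‖ ≤ r ∧ ∃ φ : ℕ → ℕ, StrictMono φ ∧
      ∀ g : E, Tendsto (fun n ↦ ⟪u (φ n), g⟫_𝕜) atTop (𝓝 ⟪h, g⟫_𝕜) := by
  let F (n : ℕ) : WeakDual 𝕜 E := (InnerProductSpace.toDual 𝕜 E (u n)).toWeakDual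
  have hF (n : ℕ) : F n ∈ WeakDual.toStrongDual ⁻¹' Metric.closedBall (0 : StrongDual 𝕜 E) r :=
    mem_closedBall_zero_iff.2 (((InnerProductSpace.toDual 𝕜 E).norm_map _).trans_le (hu n))
  obtain ⟨f, hf, φ, hφ, hlim⟩ := WeakDual.isSeqCompact_closedBall 𝕜 E 0 r hF
  refine ⟨(InnerProductSpace.toDual 𝕜 E).symm (WeakDual.toStrongDual f), ?_, φ, hφ, fun g ↦ ?_⟩
  · rw [LinearIsometryEquiv.norm_map]
    exact mem_closedBall_zero_iff.1 hf
  · rw [InnerProductSpace.toDual_symm_apply]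
    exact ((WeakDual.eval_continuous g).tendsto f).comp hlim

theorem exists_subseq_tendsto_inner {u : ℕ → E} {r : ℝ} (hu : ∀ n, ‖u n‖ ≤ r) :
    ∃ h : E, ‖h‖ ≤ r ∧ ∃ φ : ℕ → ℕ, StrictMono φ ∧
      ∀ g : E, Tendsto (fun n ↦ ⟪u (φ n), g⟫_𝕜) atTop (𝓝 ⟪h, g⟫_𝕜) := by
  let K : Submodule 𝕜 E := (Submodule.span 𝕜 (range u)).topologicalClosure
  have : CompleteSpace K := (Submodule.isClosed_topologicalClosure _).completeSpace_coe
  have hK : TopologicalSpace.IsSeparable (K : Set E) := by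
    simpa only [K, Submodule.topologicalClosure_coe] using
      ((countable_range u).isSeparable.span (R := 𝕜)).closure
  have : TopologicalSpace.SeparableSpace K := hK.separableSpace
  have huK (n : ℕ) : u n ∈ K :=
    Submodule.le_topologicalClosure _ (Submodule.subset_span (mem_range_self n))
  obtain ⟨h, hh, φ, hφ, hlim⟩ :=
    exists_subseq_tendsto_inner_of_separable (𝕜 := 𝕜) (u := fun n ↦ (⟨u n, huK n⟩ : K)) hu
  refine ⟨h, hh, φ, hφ, fun g ↦ ?_⟩
  simpa only [Submodule.inner_orthogonalProjectionOnto_eq_of_mem_left] using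
    hlim (K.orthogonalProjectionOnto g)

end WeakCompactness

section TangentCone

variable {E : Type*} [NormedAddCommGroup E] [InnerProductSpace ℝ E] [CompleteSpace E]
  {C : Set E} {x y u : E}

/-- The tangent cone of convex analysis to `C` at `x`, i.e. the closed convex cone generated by the
feasible directions `C - x`. It is encoded as their bipolar, which makes it weakly closed by
construction. -/
noncomputable def closedTangentCone (C : Set E) (x : E) : ProperCone ℝ E :=
  innerDual (innerDual ((· - x) '' C))

theorem smul_sub_mem_closedTangentCone (hy : y ∈ C) {c : ℝ} (hc : 0 ≤ c) :
    c • (y - x) ∈ closedTangentCone C x := by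
  refine mem_innerDual.2 fun g hg ↦ ?_
  rw [real_inner_smul_right, real_inner_comm]
  exact mul_nonneg hc (hg (mem_image_of_mem _ hy))

theorem map_nonneg_of_mem_closedTangentCone {f : StrongDual ℝ E} (hf : ∀ y ∈ C, 0 ≤ f (y - x))
    (hu : u ∈ closedTangentCone C x) : 0 ≤ f u := by
  rw [← InnerProductSpace.toDual_symm_apply]
  refine hu (mem_innerDual.2 <| forall_mem_image.2 fun y hy ↦ ?_)
  rw [real_inner_comm, InnerProductSpace.toDual_symm_apply]
  exact hf y hy

theorem mem_innerDual_of_tendsto_inner {ι : Type*} {l : Filter ι} [l.NeBot] {s : Set E}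
    {v : ι → E} (hv : ∀ i, v i ∈ innerDual s)
    (hlim : ∀ g, Tendsto (fun i ↦ ⟪v i, g⟫) l (𝓝 ⟪u, g⟫)) : u ∈ innerDual s := by
  refine mem_innerDual.2 fun g hg ↦ ?_
  rw [real_inner_comm]
  refine ge_of_tendsto' (hlim g) fun i ↦ ?_
  rw [real_inner_comm]
  exact hv i hg

end TangentCone

section QuadraticGrowth

variable {E : Type*} [NormedAddCommGroup E] [InnerProductSpace ℝ E] [CompleteSpace E]
  {C : Set E} {j : E → ℝ} {x : E}

/-- The Legendre-type condition of modulus `α` on `j''` at `x` along `C`: weak sequential lower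
semicontinuity of the quadratic forms `j''(xₖ)` on the unit sphere, for `xₖ → x` in `C`, with a
gain of `α (1 - ‖h‖²)` whenever norm is lost in the weak limit `h`. -/
def IsLegendreWithinAt (j : E → ℝ) (C : Set E) (x : E) (α : ℝ) : Prop :=
  ∀ (ξ u : ℕ → E) (h : E), (∀ k, ξ k ∈ C) → Tendsto ξ atTop (𝓝 x) → (∀ k, ‖u k‖ = 1) →
    (∀ g, Tendsto (fun k ↦ ⟪u k, g⟫) atTop (𝓝 ⟪h, g⟫)) →
    fderiv ℝ (fderiv ℝ j) x h h + α * (1 - ‖h‖ ^ 2) ≤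
      liminf (fun k ↦ fderiv ℝ (fderiv ℝ j) (ξ k) (u k) (u k)) atTop

theorem exists_unit_direction_of_lt_quadratic (hC : StarConvex ℝ x C) (hj : ContDiff ℝ 2 j)
    {y : E} (hy : y ∈ C) {δ : ℝ} (hlt : j y < j x + δ / 2 * ‖y - x‖ ^ 2) :
    ∃ ξ ∈ C, ‖ξ - x‖ ≤ ‖y - x‖ ∧ ∃ u ∈ closedTangentCone C x, ‖u‖ = 1 ∧ 0 < ‖y - x‖ ∧
      fderiv ℝ j x u + ‖y - x‖ / 2 * fderiv ℝ (fderiv ℝ j) ξ u u < δ / 2 * ‖y - x‖ := by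
  have hyx : y - x ≠ 0 := by
    intro h
    simp [sub_eq_zero.1 h] at hlt
  have hρ : 0 < ‖y - x‖ := norm_pos_iff.2 hyx
  have hdiff : Differentiable ℝ j := hj.differentiable two_ne_zero
  have hdiff' : Differentiable ℝ (fderiv ℝ j) :=
    (hj.fderiv_right (m := 1) le_rfl).differentiable one_ne_zero
  obtain ⟨ξ, hξ, htaylor⟩ :=
    exists_mem_openSegment_eq_taylor_two (fun z _ ↦ hdiff z) (fun z _ ↦ hdiff' z) (x := x) (y := y)
  refine ⟨ξ, hC.openSegment_subset hy hξ,
    norm_sub_le_of_mem_segment (openSegment_subset_segment ℝ x y hξ),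
    NormedSpace.normalize (y - x), smul_sub_mem_closedTangentCone hy (by positivity),
    NormedSpace.norm_normalize hyx, hρ, ?_⟩
  set u := NormedSpace.normalize (y - x)
  have hu : y - x = ‖y - x‖ • u := (NormedSpace.norm_smul_normalize _).symm
  refine lt_of_mul_lt_mul_left ?_ hρ.le
  have hfirst : fderiv ℝ j x (y - x) = ‖y - x‖ * fderiv ℝ j x u := by
    conv_lhs => rw [hu, map_smul, smul_eq_mul]
  have hsecond : fderiv ℝ (fderiv ℝ j) ξ (y - x) (y - x) =
      ‖y - x‖ ^ 2 * fderiv ℝ (fderiv ℝ j) ξ u u := by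
    conv_lhs => rw [hu]
    simp only [map_smul, smul_apply, smul_eq_mul]
    ring
  rw [hfirst, hsecond] at htaylor
  linarith

theorem exists_seq_critical_of_frequently_lt_quadratic (hC : StarConvex ℝ x C)
    (hj : ContDiff ℝ 2 j) (hfirst : ∀ y ∈ C, 0 ≤ fderiv ℝ j x (y - x))
    (hfreq : ∀ δ > 0, ∃ᶠ y in 𝓝[C] x, j y < j x + δ / 2 * ‖y - x‖ ^ 2) :
    ∃ ξ u : ℕ → E, (∀ k, ξ k ∈ C) ∧ Tendsto ξ atTop (𝓝 x) ∧
      (∀ k, u k ∈ closedTangentCone C x) ∧ (∀ k, ‖u k‖ = 1) ∧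
      Tendsto (fun k ↦ fderiv ℝ j x (u k)) atTop (𝓝 0) ∧
      ∀ k : ℕ, fderiv ℝ (fderiv ℝ j) (ξ k) (u k) (u k) ≤ 1 / ((k : ℝ) + 1) := by
  have hlt (k : ℕ) : ∃ y ∈ C, ‖y - x‖ < 1 / ((k : ℝ) + 1) ∧
      j y < j x + 1 / ((k : ℝ) + 1) / 2 * ‖y - x‖ ^ 2 := by
    have hk : (0 : ℝ) < 1 / ((k : ℝ) + 1) := Nat.one_div_pos_of_nat
    obtain ⟨y, ⟨hyx, hyC⟩, hy⟩ := Metric.nhdsWithin_basis_ball.frequently_iff.1 (hfreq _ hk) _ hk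
    exact ⟨y, hyC, mem_ball_iff_norm.1 hyx, hy⟩
  choose y hyC hyx hy using hlt
  choose ξ hξC hξx u huT hu hρ hlt using
    fun k ↦ exists_unit_direction_of_lt_quadratic hC hj (hyC k) (hy k)
  have hε : Tendsto (fun k : ℕ ↦ 1 / ((k : ℝ) + 1)) atTop (𝓝 0) :=
    tendsto_one_div_add_atTop_nhds_zero_nat
  have hρ_lim : Tendsto (fun k ↦ ‖y k - x‖) atTop (𝓝 0) :=
    squeeze_zero (fun _ ↦ norm_nonneg _) (fun k ↦ (hyx k).le) hε
  have hξ : Tendsto ξ atTop (𝓝 x) :=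
    tendsto_iff_norm_sub_tendsto_zero.2 (squeeze_zero (fun _ ↦ norm_nonneg _) hξx hρ_lim)
  have hnonneg (k : ℕ) : 0 ≤ fderiv ℝ j x (u k) :=
    map_nonneg_of_mem_closedTangentCone hfirst (huT k)
  refine ⟨ξ, u, hξC, hξ, huT, hu, ?_, fun k ↦ ?_⟩
  · have hsecond : Tendsto
        (fun k ↦ ‖y k - x‖ * fderiv ℝ (fderiv ℝ j) (ξ k) (u k) (u k)) atTop (𝓝 0) :=
      hρ_lim.zero_mul_isBoundedUnder_le (isBoundedUnder_abs_fderiv_fderiv hj hξ hu)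
    have hbound : Tendsto (fun k : ℕ ↦ (1 / ((k : ℝ) + 1) * ‖y k - x‖ -
        ‖y k - x‖ * fderiv ℝ (fderiv ℝ j) (ξ k) (u k) (u k)) / 2) atTop (𝓝 0) := by
      simpa using ((hε.mul hρ_lim).sub hsecond).div_const 2
    exact squeeze_zero hnonneg (fun k ↦ by linarith [hlt k]) hbound
  · refine le_of_mul_le_mul_left (a := ‖y k - x‖) ?_ (hρ k)
    linarith [hlt k, hnonneg k]

theorem exists_eventually_quadratic_growth {α : ℝ} (hC : StarConvex ℝ x C) (hj : ContDiff ℝ 2 j)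
    (hfirst : ∀ y ∈ C, 0 ≤ fderiv ℝ j x (y - x)) (hα : 0 < α)
    (hlegendre : IsLegendreWithinAt j C x α)
    (hpos : ∀ h ∈ closedTangentCone C x, fderiv ℝ j x h = 0 → h ≠ 0 →
      0 < fderiv ℝ (fderiv ℝ j) x h h) :
    ∃ δ > (0 : ℝ), ∀ᶠ y in 𝓝[C] x, j x + δ / 2 * ‖y - x‖ ^ 2 ≤ j y := by
  by_contra! hfail
  obtain ⟨ξ, u, hξC, hξ, huT, hu, hu_first, hu_second⟩ :=
    exists_seq_critical_of_frequently_lt_quadratic hC hj hfirst hfail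
  obtain ⟨h, hh, φ, hφ, hweak⟩ := exists_subseq_tendsto_inner (𝕜 := ℝ) fun k ↦ (hu k).le
  have hhT : h ∈ closedTangentCone C x := mem_innerDual_of_tendsto_inner (fun k ↦ huT (φ k)) hweak
  have hh_first : fderiv ℝ j x h = 0 := by
    have hlim : Tendsto (fun k ↦ fderiv ℝ j x (u (φ k))) atTop (𝓝 (fderiv ℝ j x h)) := by
      simpa only [inner_gradient_right, conj_trivial] using hweak (gradient j x)
    exact tendsto_nhds_unique hlim (hu_first.comp hφ.tendsto_atTop)
  have hliminf :
      liminf (fun k ↦ fderiv ℝ (fderiv ℝ j) (ξ (φ k)) (u (φ k)) (u (φ k))) atTop ≤ 0 := by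
    have hε : Tendsto (fun k ↦ 1 / ((φ k : ℝ) + 1)) atTop (𝓝 0) :=
      tendsto_one_div_add_atTop_nhds_zero_nat.comp hφ.tendsto_atTop
    have hbdd := isBoundedUnder_abs_fderiv_fderiv hj (hξ.comp hφ.tendsto_atTop) fun k ↦ hu (φ k)
    rw [← hε.liminf_eq]
    exact liminf_le_liminf (Eventually.of_forall fun k ↦ hu_second (φ k))
      (isBoundedUnder_le_abs.1 hbdd).2 hε.isBoundedUnder_le.isCoboundedUnder_ge
  have hcurv : fderiv ℝ (fderiv ℝ j) x h h + α * (1 - ‖h‖ ^ 2) ≤ 0 :=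
    (hlegendre _ _ h (fun k ↦ hξC (φ k)) (hξ.comp hφ.tendsto_atTop) (fun k ↦ hu (φ k)) hweak).trans
      hliminf
  rcases eq_or_ne h 0 with rfl | hh_ne
  · exact absurd (by simpa using hcurv) hα.not_ge
  · have hgain : 0 ≤ α * (1 - ‖h‖ ^ 2) :=
      mul_nonneg hα.le (sub_nonneg.2 (pow_le_one₀ (norm_nonneg h) hh))
    linarith [hpos h hhT hh_first hh_ne]

end QuadraticGrowth

section PointwiseConstraints

variable {Ω F : Type*} [MeasurableSpace Ω] {μ : Measure Ω} [NormedAddCommGroup F]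

/-- Multiplication of an `Lᵖ` function by the indicator function of a measurable set. -/
noncomputable def lpIndicator {p : ENNReal} {A : Set Ω} (hA : MeasurableSet A) (f : Lp F p μ) :
    Lp F p μ :=
  ((Lp.memLp f).indicator hA).toLp (A.indicator f)

theorem coeFn_lpIndicator {p : ENNReal} {A : Set Ω} (hA : MeasurableSet A) (f : Lp F p μ) :
    lpIndicator hA f =ᵐ[μ] A.indicator f :=
  MemLp.coeFn_toLp _

/-- The set of `Lᵖ` functions satisfying the pointwise constraint `q(x) ∈ S x` for almost
every `x`. -/
def lpConstraintSet (p : ENNReal) (μ : Measure Ω) (S : Ω → Set F) : Set (Lp F p μ) :=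
  {q | ∀ᵐ x ∂μ, q x ∈ S x}

variable {p : ENNReal} {S : Ω → Set F}

theorem convex_lpConstraintSet [NormedSpace ℝ F] (hS : ∀ x, Convex ℝ (S x)) :
    Convex ℝ (lpConstraintSet p μ S) := by
  intro f hf g hg s t hs ht hst
  filter_upwards [hf, hg, Lp.coeFn_add (s • f) (t • g), Lp.coeFn_smul s f, Lp.coeFn_smul t g]
    with x hfx hgx hadd hsf htg
  rw [hadd, Pi.add_apply, hsf, htg]
  exact hS x hfx hgx hs ht hst

theorem exists_sub_eq_lpIndicator {q r : Lp F p μ} (hq : q ∈ lpConstraintSet p μ S)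
    (hr : r ∈ lpConstraintSet p μ S) {A : Set Ω} (hA : MeasurableSet A) :
    ∃ r' ∈ lpConstraintSet p μ S, r' - q = lpIndicator hA (r - q) := by
  refine ⟨q + lpIndicator hA (r - q), ?_, add_sub_cancel_left _ _⟩
  filter_upwards [hq, hr, Lp.coeFn_add q (lpIndicator hA (r - q)), coeFn_lpIndicator hA (r - q),
    Lp.coeFn_sub r q] with x hqx hrx hadd hind hsub
  rw [hadd, Pi.add_apply, hind]
  by_cases hx : x ∈ A
  · rwa [indicator_of_mem hx, hsub, Pi.sub_apply, add_sub_cancel]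
  · rwa [indicator_of_notMem hx, add_zero]

variable [InnerProductSpace ℝ F]

theorem inner_lpIndicator_left {A : Set Ω} (hA : MeasurableSet A) (f g : Lp F 2 μ) :
    ⟪lpIndicator hA f, g⟫ = ∫ x in A, ⟪f x, g x⟫ ∂μ := by
  rw [L2.inner_def, ← integral_indicator hA]
  refine integral_congr_ae ?_
  filter_upwards [coeFn_lpIndicator hA f] with x hx
  rw [hx]
  by_cases hxA : x ∈ A <;> simp [hxA]

theorem inner_lpIndicator_comm {A : Set Ω} (hA : MeasurableSet A) (f g : Lp F 2 μ) :
    ⟪lpIndicator hA f, g⟫ = ⟪f, lpIndicator hA g⟫ := by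
  rw [real_inner_comm _ f, inner_lpIndicator_left, inner_lpIndicator_left]
  simp only [real_inner_comm]

variable [CompleteSpace F] {q g h : Lp F 2 μ}

theorem lpIndicator_mem_innerDual (hq : q ∈ lpConstraintSet 2 μ S)
    (hg : g ∈ innerDual ((· - q) '' lpConstraintSet 2 μ S)) {A : Set Ω} (hA : MeasurableSet A) :
    lpIndicator hA g ∈ innerDual ((· - q) '' lpConstraintSet 2 μ S) := by
  refine mem_innerDual.2 (forall_mem_image.2 fun r hr ↦ ?_)
  obtain ⟨r', hr', hsub⟩ := exists_sub_eq_lpIndicator hq hr hA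
  rw [← inner_lpIndicator_comm, ← hsub]
  exact hg (mem_image_of_mem _ hr')

theorem ae_inner_nonneg_of_mem_closedTangentCone (hq : q ∈ lpConstraintSet 2 μ S)
    (hg : g ∈ innerDual ((· - q) '' lpConstraintSet 2 μ S))
    (hh : h ∈ closedTangentCone (lpConstraintSet 2 μ S) q) : ∀ᵐ x ∂μ, 0 ≤ ⟪g x, h x⟫ := by
  refine ae_nonneg_of_forall_setIntegral_nonneg (L2.integrable_inner g h) fun A hA _ ↦ ?_
  rw [← inner_lpIndicator_left hA]
  exact hh (lpIndicator_mem_innerDual hq hg hA)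

theorem ae_inner_const_nonneg_of_mem_closedTangentCone (hq : q ∈ lpConstraintSet 2 μ S)
    (hh : h ∈ closedTangentCone (lpConstraintSet 2 μ S) q) {A : Set Ω} (hA : MeasurableSet A)
    (c : F) (hc : ∀ x ∈ A, ∀ y ∈ S x, 0 ≤ ⟪c, y - q x⟫) :
    ∀ᵐ x ∂μ, x ∈ A → 0 ≤ ⟪c, h x⟫ := by
  -- Pairing with `‖h‖ • c` instead of `c` keeps the test function in `L²` when `μ` is infinite.
  have hmemLp : MemLp (A.indicator fun x ↦ ‖h x‖ • c) 2 μ :=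
    ((ContinuousLinearMap.toSpanSingleton ℝ c).comp_memLp' (Lp.memLp h).norm).indicator hA
  have hg : hmemLp.toLp _ =ᵐ[μ] A.indicator fun x ↦ ‖h x‖ • c := hmemLp.coeFn_toLp
  have hg_mem : hmemLp.toLp _ ∈ innerDual ((· - q) '' lpConstraintSet 2 μ S) := by
    refine mem_innerDual.2 (forall_mem_image.2 fun r hr ↦ ?_)
    rw [L2.inner_def]
    refine integral_nonneg_of_ae ?_
    filter_upwards [hg, hr, Lp.coeFn_sub r q] with x hgx hrx hsub
    rw [hgx, hsub, Pi.zero_apply, Pi.sub_apply]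
    by_cases hxA : x ∈ A
    · rw [indicator_of_mem hxA, real_inner_smul_right, real_inner_comm]
      exact mul_nonneg (norm_nonneg _) (hc x hxA _ hrx)
    · rw [indicator_of_notMem hxA, inner_zero_right]
  filter_upwards [ae_inner_nonneg_of_mem_closedTangentCone hq hg_mem hh, hg] with x hx hgx hxA
  rw [hgx, indicator_of_mem hxA, real_inner_smul_left] at hx
  rcases eq_or_ne (h x) 0 with h0 | h0
  · simp [h0]
  · exact nonneg_of_mul_nonneg_right hx (norm_pos_iff.2 h0)

end PointwiseConstraints

section Box

variable {Ω : Type*} [MeasurableSpace Ω] {μ : Measure Ω} {a b : ℝ} {q d h : Lp ℝ 2 μ}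

theorem integral_mul_eq_inner (f g : Lp ℝ 2 μ) : ∫ x, f x * g x ∂μ = ⟪f, g⟫ := by
  simp only [L2.inner_def, RCLike.inner_apply, conj_trivial, mul_comm]

theorem integral_mul_sub_eq_inner (f g g' : Lp ℝ 2 μ) :
    ∫ x, f x * (g x - g' x) ∂μ = ⟪f, g - g'⟫ := by
  rw [← integral_mul_eq_inner]
  refine integral_congr_ae ?_
  filter_upwards [Lp.coeFn_sub g g'] with x hx
  rw [hx, Pi.sub_apply]

/-- The critical cone at `q` of the box `a ≤ q ≤ b` in `L²`, for the gradient `d`. -/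
def boxCriticalCone (a b : ℝ) (q d : Lp ℝ 2 μ) : Set (Lp ℝ 2 μ) :=
  {v | ∀ᵐ x ∂μ, (d x ≠ 0 → v x = 0) ∧ (q x = a → 0 ≤ v x) ∧ (q x = b → v x ≤ 0)}

theorem mem_boxCriticalCone_of_mem_closedTangentCone
    (hq : q ∈ lpConstraintSet 2 μ fun _ ↦ Icc a b)
    (hd : d ∈ innerDual ((· - q) '' lpConstraintSet 2 μ fun _ ↦ Icc a b))
    (hh : h ∈ closedTangentCone (lpConstraintSet 2 μ fun _ ↦ Icc a b) q) (hdh : ⟪d, h⟫ = 0) :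
    h ∈ boxCriticalCone a b q d := by
  have hq_meas : Measurable q := (Lp.stronglyMeasurable q).measurable
  have hlower : ∀ᵐ x ∂μ, q x = a → 0 ≤ ⟪(1 : ℝ), h x⟫ :=
    ae_inner_const_nonneg_of_mem_closedTangentCone hq hh (hq_meas (measurableSet_singleton a)) 1
      fun x (hx : q x = a) y hy ↦ by simpa [hx] using hy.1
  have hupper : ∀ᵐ x ∂μ, q x = b → 0 ≤ ⟪(-1 : ℝ), h x⟫ :=
    ae_inner_const_nonneg_of_mem_closedTangentCone hq hh (hq_meas (measurableSet_singleton b)) (-1)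
      fun x (hx : q x = b) y hy ↦ by simpa [hx] using hy.2
  have hdh_ae : ∀ᵐ x ∂μ, ⟪d x, h x⟫ = 0 := by
    rw [L2.inner_def] at hdh
    exact (integral_eq_zero_iff_of_nonneg_ae (ae_inner_nonneg_of_mem_closedTangentCone hq hd hh)
      (L2.integrable_inner d h)).1 hdh
  filter_upwards [hlower, hupper, hdh_ae] with x hlx hux hdx
  refine ⟨fun hd_ne ↦ ?_, fun hqa ↦ by simpa using hlx hqa, fun hqb ↦ by simpa using hux hqb⟩
  simpa [hd_ne] using hdx

end Box

theorem stmt_10_general {Ω : Type*} [MeasurableSpace Ω] (μ : Measure Ω)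
    (a b : ℝ)
    (j : Lp ℝ 2 μ → ℝ) (hj : ContDiff ℝ 2 j)
    (qbar : Lp ℝ 2 μ) (hqbar_ad : ∀ᵐ x ∂μ, a ≤ qbar x ∧ qbar x ≤ b)
    (dbar : Lp ℝ 2 μ)
    (hrep : ∀ w : Lp ℝ 2 μ, fderiv ℝ j qbar w = ∫ x, dbar x * w x ∂μ)
    (hvi : ∀ q : Lp ℝ 2 μ, (∀ᵐ x ∂μ, a ≤ q x ∧ q x ≤ b) →
      0 ≤ ∫ x, dbar x * (q x - qbar x) ∂μ)
    (hlsc : ∃ α : ℝ, 0 < α ∧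
      ∀ (qk : ℕ → Lp ℝ 2 μ) (hk : ℕ → Lp ℝ 2 μ) (h : Lp ℝ 2 μ),
        (∀ k, ∀ᵐ x ∂μ, a ≤ qk k x ∧ qk k x ≤ b) →
        Tendsto qk atTop (nhds qbar) →
        (∀ k, ‖hk k‖ = 1) →
        (∀ g : Lp ℝ 2 μ, Tendsto (fun k => ∫ x, hk k x * g x ∂μ) atTop
          (nhds (∫ x, h x * g x ∂μ))) →
        fderiv ℝ (fderiv ℝ j) qbar h h + α * (1 - ‖h‖ ^ 2) ≤
          liminf (fun k => fderiv ℝ (fderiv ℝ j) (qk k) (hk k) (hk k)) atTop)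
    (hpos : ∀ v : Lp ℝ 2 μ,
      (∀ᵐ x ∂μ, (dbar x ≠ 0 → v x = 0) ∧
        (qbar x = a → 0 ≤ v x) ∧ (qbar x = b → v x ≤ 0)) → v ≠ 0 →
      0 < fderiv ℝ (fderiv ℝ j) qbar v v) :
    ∃ δ > (0 : ℝ), ∃ σ > (0 : ℝ), ∀ q : Lp ℝ 2 μ,
      (∀ᵐ x ∂μ, a ≤ q x ∧ q x ≤ b) → ‖q - qbar‖ ≤ σ →
      j qbar + δ / 2 * ‖q - qbar‖ ^ 2 ≤ j q := by
  let Q : Set (Lp ℝ 2 μ) := lpConstraintSet 2 μ fun _ ↦ Icc a b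
  have hfirst : ∀ q ∈ Q, 0 ≤ ⟪dbar, q - qbar⟫ := fun q hq ↦
    (hvi q hq).trans_eq (integral_mul_sub_eq_inner dbar q qbar)
  simp only [integral_mul_eq_inner] at hrep hlsc
  obtain ⟨α, hα, hlegendre⟩ := hlsc
  obtain ⟨δ, hδ, hgrowth⟩ := exists_eventually_quadratic_growth
    ((convex_lpConstraintSet fun _ ↦ convex_Icc a b).starConvex hqbar_ad) hj
    (fun q hq ↦ (hfirst q hq).trans_eq (hrep _).symm) hα (C := Q) hlegendre fun h hh hdh ↦
      hpos h <| mem_boxCriticalCone_of_mem_closedTangentCone hqbar_ad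
        (mem_innerDual.2 <| forall_mem_image.2 fun q hq ↦
          (hfirst q hq).trans_eq (real_inner_comm _ _)) hh ((hrep h).symm.trans hdh)
  obtain ⟨σ, hσ, hball⟩ :=
    (nhdsWithin_hasBasis Metric.nhds_basis_closedBall Q).eventually_iff.1 hgrowth
  exact ⟨δ, hδ, σ, hσ, fun q hq hqσ ↦ hball ⟨mem_closedBall_iff_norm.2 hqσ, hq⟩⟩

/-- Second order sufficient optimality conditions (quadratic growth) on an `L²` box:
if `j` is `C²`, `(q̄, d̄)` satisfies the first order conditions (representation of
`j'(q̄)` and the variational inequality), `j''` enjoys the weak sequential lower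
semicontinuity-with-Legendre-term property with constant `α > 0`, and `j''(q̄)` is
positive definite on the critical cone `C_{q̄} \ {0}`, then `j` grows quadratically
around `q̄` on `Q_ad`. -/
theorem stmt_10 {Ω : Type*} [MeasurableSpace Ω] (μ : Measure Ω) [IsFiniteMeasure μ]
    (a b : ℝ) (hab : a < b)
    (j : Lp ℝ 2 μ → ℝ) (hj : ContDiff ℝ 2 j)
    (qbar : Lp ℝ 2 μ) (hqbar_ad : ∀ᵐ x ∂μ, a ≤ qbar x ∧ qbar x ≤ b)
    (dbar : Lp ℝ 2 μ)
    (hrep : ∀ w : Lp ℝ 2 μ, fderiv ℝ j qbar w = ∫ x, dbar x * w x ∂μ)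
    (hvi : ∀ q : Lp ℝ 2 μ, (∀ᵐ x ∂μ, a ≤ q x ∧ q x ≤ b) →
      0 ≤ ∫ x, dbar x * (q x - qbar x) ∂μ)
    (hlsc : ∃ α : ℝ, 0 < α ∧
      ∀ (qk : ℕ → Lp ℝ 2 μ) (hk : ℕ → Lp ℝ 2 μ) (h : Lp ℝ 2 μ),
        (∀ k, ∀ᵐ x ∂μ, a ≤ qk k x ∧ qk k x ≤ b) →
        Tendsto qk atTop (nhds qbar) →
        (∀ k, ‖hk k‖ = 1) →
        (∀ g : Lp ℝ 2 μ, Tendsto (fun k => ∫ x, hk k x * g x ∂μ) atTop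
          (nhds (∫ x, h x * g x ∂μ))) →
        fderiv ℝ (fderiv ℝ j) qbar h h + α * (1 - ‖h‖ ^ 2) ≤
          liminf (fun k => fderiv ℝ (fderiv ℝ j) (qk k) (hk k) (hk k)) atTop)
    (hpos : ∀ v : Lp ℝ 2 μ,
      (∀ᵐ x ∂μ, (dbar x ≠ 0 → v x = 0) ∧
        (qbar x = a → 0 ≤ v x) ∧ (qbar x = b → v x ≤ 0)) → v ≠ 0 →
      0 < fderiv ℝ (fderiv ℝ j) qbar v v) :
    ∃ δ > (0 : ℝ), ∃ σ > (0 : ℝ), ∀ q : Lp ℝ 2 μ,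
      (∀ᵐ x ∂μ, a ≤ q x ∧ q x ≤ b) → ‖q - qbar‖ ≤ σ →
      j qbar + δ / 2 * ‖q - qbar‖ ^ 2 ≤ j q := by
  exact stmt_10_general μ a b j hj qbar hqbar_ad dbar hrep hvi hlsc hpos
end
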